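/- For every n ≥ 0 and every word β over {0,1} of length 2^n: if β 0^{(n)} 0^{(n)} is a factor of ω then β = 1^{(n)}; if 0^{(n)} 0^{(n)} β is a factor of ω then β = 1^{(n)}; if β 1^{(n)} 1^{(n)} is a factor of ω then β = 0^{(n)}; and if 1^{(n)} 1^{(n)} β is a factor of ω then β = 0^{(n)}. -/

import Mathlib

/-- One-sided Thue–Morse sequence: parity of the binary digit sum. -/
def tm (n : ℕ) : ℕ := (Nat.digits 2 n).sum % 2

/-- Two-sided Thue–Morse sequence `ω : ℤ → {0,1}`. -/
def tmZ (n : ℤ) : ℕ := if 0 ≤ n then tm n.toNat else tm (-n - 1).toNat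

/-- The block `ω_[m, m+k-1]` of the two-sided Thue–Morse sequence. -/
def tmBlock (m : ℤ) (k : ℕ) : List ℕ := (List.range k).map fun j => tmZ (m + j)

/-- A (nonempty) word is a factor of the two-sided Thue–Morse sequence. -/
def IsFactor (α : List ℕ) : Prop := α ≠ [] ∧ ∃ m : ℤ, α = tmBlock m α.length

/-- The words `i⁽ⁿ⁾`: `blk i 0 = [i]`, `blk i (n+1) = blk i n ++ blk (1-i) n`. -/
def blk : ℕ → ℕ → List ℕ
  | i, 0 => [i]
  | i, n + 1 => blk i n ++ blk (1 - i) n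

/-!
Let `σ` be the substitution `0 ↦ 01`, `1 ↦ 10`, acting on two-sided sequences and on words. The
two-sided Thue–Morse sequence satisfies `σ² ω = ω`, so `ω` is an `N`-fold image under `σ` for every
`N`, and `i⁽ⁿ⁺¹⁾ = σ (i⁽ⁿ⁾)`. An image under `σ` contains no cube of a letter, which settles the
case `n = 0`. If `σ (w)` with `|w| ≥ 2` occurred in `σ (σ (y))` at an odd position, then `σ (y)`
would contain such a cube; hence occurrences of `i⁽ⁿ⁺¹⁾i⁽ⁿ⁺¹⁾` come from occurrences of `i⁽ⁿ⁾i⁽ⁿ⁾`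
one level down.
-/

/-- The word `w` occurs in the two-sided sequence `x` with its first letter at position `m`. -/
def OccursAt {α : Type*} (x : ℤ → α) (w : List α) (m : ℤ) : Prop :=
  w = (List.range w.length).map fun j : ℕ => x (m + j)

section OccursAt

variable {α : Type*} {x : ℤ → α}

theorem occursAt_nil (m : ℤ) : OccursAt x [] m := rfl

theorem occursAt_append {u v : List α} {m : ℤ} :
    OccursAt x (u ++ v) m ↔ OccursAt x u m ∧ OccursAt x v (m + u.length) := by
  simp only [OccursAt, List.length_append, List.range_add, List.map_append, List.map_map,
    Function.comp_def, Nat.cast_add, ← add_assoc]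
  exact List.append_eq_append_iff_of_size_eq_left (by simp)

theorem occursAt_cons {a : α} {w : List α} {m : ℤ} :
    OccursAt x (a :: w) m ↔ x m = a ∧ OccursAt x w (m + 1) := by
  rw [← List.singleton_append, occursAt_append]
  simp [OccursAt, eq_comm]

theorem OccursAt.eq_of_length_eq {u v : List α} {m : ℤ} (hu : OccursAt x u m)
    (hv : OccursAt x v m) (h : u.length = v.length) : u = v := by
  rw [OccursAt, h] at hu
  exact hu.trans hv.symm

end OccursAt

/-- The Thue–Morse substitution `σ : a ↦ a (1 - a)` on two-sided sequences, with the image of the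
letter at position `k` placed at positions `2k` and `2k + 1`. Only binary sequences are
meant: for a letter `a > 1` the subtraction truncates. -/
def morse (y : ℤ → ℕ) (k : ℤ) : ℕ := if k % 2 = 0 then y (k / 2) else 1 - y (k / 2)

/-- The Thue–Morse substitution `σ : a ↦ a (1 - a)` on finite words. -/
def morseWord (w : List ℕ) : List ℕ := w.flatMap fun a => [a, 1 - a]

/-- All letters of the two-sided sequence `x` lie in `{0, 1}`. -/
def IsBinary (x : ℤ → ℕ) : Prop := ∀ k, x k ≤ 1

/-- No cube `aaa` of a single letter `a` occurs in the two-sided sequence `x`. -/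
def IsLetterCubeFree {α : Type*} (x : ℤ → α) : Prop :=
  ∀ k, ¬ (x k = x (k + 1) ∧ x (k + 1) = x (k + 2))

section Substitution

variable {y z : ℤ → ℕ}

theorem morse_two_mul (y : ℤ → ℕ) (k : ℤ) : morse y (2 * k) = y k := by
  simp [morse]

theorem morse_two_mul_add_one (y : ℤ → ℕ) (k : ℤ) : morse y (2 * k + 1) = 1 - y k := by
  rw [morse, if_neg (by omega), show (2 * k + 1) / 2 = k by omega]

theorem isBinary_morse (hy : IsBinary y) : IsBinary (morse y) := by
  intro k
  unfold morse
  split_ifs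
  exacts [hy _, Nat.sub_le _ _]

theorem isBinary_iterate_morse (hy : IsBinary y) (n : ℕ) : IsBinary (morse^[n] y) :=
  Function.Iterate.rec IsBinary hy (fun _ => isBinary_morse) n

theorem isLetterCubeFree_morse (y : ℤ → ℕ) : IsLetterCubeFree (morse y) := by
  have pair_ne (j : ℤ) : morse y (2 * j) ≠ morse y (2 * j + 1) := by
    rw [morse_two_mul, morse_two_mul_add_one]
    omega
  rintro k ⟨h₁, h₂⟩
  obtain ⟨j, rfl | rfl⟩ := Int.even_or_odd' k
  · exact pair_ne j h₁
  · refine pair_ne (j + 1) ?_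
    convert h₂ using 2 <;> ring

theorem neighbours_of_letter_square {x : ℤ → ℕ} (hx : IsBinary x) (hcube : IsLetterCubeFree x)
    {m : ℤ} (h : x m = x (m + 1)) : x (m - 1) = 1 - x m ∧ x (m + 2) = 1 - x m := by
  have left := hcube (m - 1)
  have right := hcube m
  rw [sub_add_cancel, show m - 1 + 2 = m + 1 by ring] at left
  have bound := hx m
  have bound_left := hx (m - 1)
  have bound_right := hx (m + 2)
  omega

theorem morseWord_append (u v : List ℕ) : morseWord (u ++ v) = morseWord u ++ morseWord v :=
  List.flatMap_append

theorem occursAt_morseWord {w : List ℕ} {k : ℤ} :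
    OccursAt (morse y) (morseWord w) (2 * k) ↔ OccursAt y w k := by
  induction w generalizing k with
  | nil => exact iff_of_true (occursAt_nil _) (occursAt_nil _)
  | cons a w ih =>
    have cons_image : morseWord (a :: w) = a :: (1 - a) :: morseWord w := rfl
    rw [cons_image, occursAt_cons, occursAt_cons, occursAt_cons, morse_two_mul,
      morse_two_mul_add_one, show 2 * k + 1 + 1 = 2 * (k + 1) by ring, ih, ← and_assoc]
    exact and_congr_left' (and_iff_left_of_imp fun h => h ▸ rfl)

-- At an odd position `2k + 1` the first two pairs would force `z k = z (k + 1) = z (k + 2)`.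
theorem even_of_occursAt_morseWord (hz : IsBinary z) (hcube : IsLetterCubeFree z)
    {w : List ℕ} (hw : 2 ≤ w.length) {m : ℤ} (h : OccursAt (morse z) (morseWord w) m) : Even m := by
  obtain ⟨a, b, w, rfl⟩ : ∃ a b w', w = a :: b :: w' := by
    match w, hw with
    | a :: b :: w', _ => exact ⟨a, b, w', rfl⟩
  have image : morseWord (a :: b :: w) = a :: (1 - a) :: b :: (1 - b) :: morseWord w := rfl
  simp only [image, occursAt_cons] at h
  obtain ⟨h₀, h₁, h₂, h₃, -⟩ := h
  by_contra hm
  obtain ⟨k, rfl⟩ := Int.not_even_iff_odd.mp hm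
  rw [morse_two_mul_add_one] at h₀
  rw [show 2 * k + 1 + 1 = 2 * (k + 1) by ring] at h₁ h₂ h₃
  rw [morse_two_mul] at h₁
  rw [morse_two_mul_add_one] at h₂
  rw [show 2 * (k + 1) + 1 + 1 = 2 * (k + 2) by ring, morse_two_mul] at h₃
  have bound := hz k
  have bound' := hz (k + 1)
  exact hcube k (by omega)

end Substitution

section Blocks

theorem length_blk (i n : ℕ) : (blk i n).length = 2 ^ n := by
  induction n generalizing i with
  | zero => rfl
  | succ n ih => rw [blk, List.length_append, ih, ih, pow_succ, mul_two]

theorem blk_succ_eq_morseWord (i n : ℕ) : blk i (n + 1) = morseWord (blk i n) := by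
  induction n generalizing i with
  | zero => rfl
  | succ n ih =>
    calc blk i (n + 2) = blk i (n + 1) ++ blk (1 - i) (n + 1) := rfl
      _ = morseWord (blk i n) ++ morseWord (blk (1 - i) n) := by rw [ih, ih]
      _ = morseWord (blk i (n + 1)) := (morseWord_append _ _).symm

theorem occursAt_blk_succ {y : ℤ → ℕ} {i n : ℕ} {k : ℤ} :
    OccursAt (morse y) (blk i (n + 1)) (2 * k) ↔ OccursAt y (blk i n) k := by
  rw [blk_succ_eq_morseWord, occursAt_morseWord]

theorem neighbours_of_blk_square {y : ℤ → ℕ} (hy : IsBinary y) {i n : ℕ} {m : ℤ}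
    (h : OccursAt (morse^[n + 1] y) (blk i n ++ blk i n) m) :
    OccursAt (morse^[n + 1] y) (blk (1 - i) n) (m - 2 ^ n) ∧
      OccursAt (morse^[n + 1] y) (blk (1 - i) n) (m + 2 * 2 ^ n) := by
  induction n generalizing m with
  | zero =>
    simp only [blk, List.singleton_append, occursAt_cons, occursAt_nil, and_true, zero_add,
      Function.iterate_one, pow_zero, mul_one] at h ⊢
    obtain ⟨rfl, h⟩ := h
    exact neighbours_of_letter_square (isBinary_morse hy) (isLetterCubeFree_morse y) h.symm
  | succ n ih =>
    rw [Function.iterate_succ_apply'] at h ⊢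
    rw [blk_succ_eq_morseWord, ← morseWord_append] at h
    have cube_free := isLetterCubeFree_morse (morse^[n] y)
    rw [← Function.iterate_succ_apply' morse] at cube_free
    have two_le : 2 ≤ (blk i n ++ blk i n).length := by
      have := Nat.one_le_two_pow (n := n)
      rw [List.length_append, length_blk]
      omega
    obtain ⟨k, rfl⟩ := even_iff_exists_two_mul.mp
      (even_of_occursAt_morseWord (isBinary_iterate_morse hy _) cube_free two_le h)
    rw [show 2 * k - 2 ^ (n + 1) = 2 * (k - 2 ^ n) by ring,
      show 2 * k + 2 * 2 ^ (n + 1) = 2 * (k + 2 * 2 ^ n) by ring,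
      occursAt_blk_succ, occursAt_blk_succ]
    exact ih (occursAt_morseWord.mp h)

end Blocks

section ThueMorse

theorem tm_le_one (n : ℕ) : tm n ≤ 1 := Nat.le_of_lt_succ (Nat.mod_lt _ two_pos)

theorem tm_two_mul (n : ℕ) : tm (2 * n) = tm n := by
  obtain rfl | hn := eq_or_ne n 0
  · rfl
  · have digits := Nat.digits_add 2 one_lt_two 0 n two_pos (Or.inr hn)
    rw [zero_add] at digits
    rw [tm, tm, digits, List.sum_cons, zero_add]

theorem tm_two_mul_add_one (n : ℕ) : tm (2 * n + 1) = 1 - tm n := by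
  have digits := Nat.digits_add 2 one_lt_two 1 n one_lt_two (Or.inl one_ne_zero)
  rw [tm, tm, add_comm (2 * n), digits, List.sum_cons]
  omega

theorem tmZ_natCast (n : ℕ) : tmZ n = tm n := by simp [tmZ]

theorem tmZ_negSucc (n : ℕ) : tmZ (Int.negSucc n) = tm n := by
  rw [tmZ, if_neg (by omega)]
  congr 1
  omega

theorem isBinary_tmZ : IsBinary tmZ := by
  intro k
  unfold tmZ
  split_ifs <;> exact tm_le_one _

theorem morse_natCast {x : ℤ → ℕ} (hx : ∀ n : ℕ, x n = tm n) (n : ℕ) : morse x n = tm n := by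
  obtain ⟨j, rfl | rfl⟩ := Nat.even_or_odd' n
  · rw [Nat.cast_mul, Nat.cast_ofNat, morse_two_mul, hx, tm_two_mul]
  · rw [Nat.cast_succ, Nat.cast_mul, Nat.cast_ofNat, morse_two_mul_add_one, hx,
      tm_two_mul_add_one]

-- Reading leftwards from position `-1`, each image pair is reversed, so every application of `σ`
-- complements the left half: this is why `tmZ` is fixed by `σ²` but not by `σ`.
theorem morse_negSucc {x : ℤ → ℕ} {e : ℕ} (hx : ∀ n, x (Int.negSucc n) = (e + tm n) % 2) (n : ℕ) :
    morse x (Int.negSucc n) = (e + 1 + tm n) % 2 := by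
  obtain ⟨j, rfl | rfl⟩ := Nat.even_or_odd' n
  · rw [show Int.negSucc (2 * j) = 2 * Int.negSucc j + 1 by omega, morse_two_mul_add_one, hx,
      tm_two_mul]
    omega
  · have bound := tm_le_one j
    rw [show Int.negSucc (2 * j + 1) = 2 * Int.negSucc j by omega, morse_two_mul, hx,
      tm_two_mul_add_one]
    omega

theorem morse_morse_tmZ : morse (morse tmZ) = tmZ := by
  have left (n : ℕ) : tmZ (Int.negSucc n) = (0 + tm n) % 2 := by
    rw [tmZ_negSucc, zero_add, Nat.mod_eq_of_lt (Nat.lt_succ_of_le (tm_le_one n))]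
  funext k
  cases k with
  | ofNat n => exact (morse_natCast (morse_natCast tmZ_natCast) n).trans (tmZ_natCast n).symm
  | negSucc n =>
    rw [left, morse_negSucc (morse_negSucc left)]
    omega

theorem iterate_morse_tmZ (n : ℕ) : morse^[n] (morse^[n] tmZ) = tmZ := by
  rw [← Function.iterate_add_apply, ← two_mul, Function.iterate_mul]
  exact Function.iterate_fixed morse_morse_tmZ n

theorem exists_occursAt_of_isFactor {w : List ℕ} (h : IsFactor w) : ∃ m, OccursAt tmZ w m := by
  obtain ⟨-, m, hm⟩ := h
  refine ⟨m, hm.trans ?_⟩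
  -- `tmBlock` coerces the whole list `List.range k` to `List ℤ` and then maps over integers.
  simp [tmBlock, ← List.map_eq_flatMap]

theorem neighbours_of_blk_square_tmZ {i n : ℕ} {m : ℤ}
    (h : OccursAt tmZ (blk i n ++ blk i n) m) :
    OccursAt tmZ (blk (1 - i) n) (m - 2 ^ n) ∧ OccursAt tmZ (blk (1 - i) n) (m + 2 * 2 ^ n) := by
  rw [← iterate_morse_tmZ (n + 1)] at h ⊢
  exact neighbours_of_blk_square (isBinary_iterate_morse isBinary_tmZ _) h

variable {i n : ℕ} {β : List ℕ}

theorem eq_blk_of_isFactor_append_square (hβ : β.length = 2 ^ n)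
    (h : IsFactor (β ++ blk i n ++ blk i n)) : β = blk (1 - i) n := by
  obtain ⟨m, hm⟩ := exists_occursAt_of_isFactor h
  rw [List.append_assoc, occursAt_append, hβ] at hm
  obtain ⟨occ_β, occ_square⟩ := hm
  have occ_blk := (neighbours_of_blk_square_tmZ occ_square).1
  rw [Nat.cast_pow, Nat.cast_ofNat, add_sub_cancel_right] at occ_blk
  exact occ_β.eq_of_length_eq occ_blk (hβ.trans (length_blk _ _).symm)

theorem eq_blk_of_isFactor_square_append (hβ : β.length = 2 ^ n)
    (h : IsFactor (blk i n ++ blk i n ++ β)) : β = blk (1 - i) n := by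
  obtain ⟨m, hm⟩ := exists_occursAt_of_isFactor h
  rw [occursAt_append, List.length_append, length_blk, ← two_mul] at hm
  obtain ⟨occ_square, occ_β⟩ := hm
  have occ_blk := (neighbours_of_blk_square_tmZ occ_square).2
  push_cast at occ_β
  exact occ_β.eq_of_length_eq occ_blk (hβ.trans (length_blk _ _).symm)

end ThueMorse

/-- Neighbours of the squares `0⁽ⁿ⁾0⁽ⁿ⁾` and `1⁽ⁿ⁾1⁽ⁿ⁾` in the two-sided Thue–Morse
sequence are uniquely determined. -/
theorem square_neighbours (n : ℕ) (β : List ℕ) (hβ : β.length = 2 ^ n) :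
    (IsFactor (β ++ blk 0 n ++ blk 0 n) → β = blk 1 n) ∧
    (IsFactor (blk 0 n ++ blk 0 n ++ β) → β = blk 1 n) ∧
    (IsFactor (β ++ blk 1 n ++ blk 1 n) → β = blk 0 n) ∧
    (IsFactor (blk 1 n ++ blk 1 n ++ β) → β = blk 0 n) :=
  ⟨eq_blk_of_isFactor_append_square hβ, eq_blk_of_isFactor_square_append hβ,
    eq_blk_of_isFactor_append_square hβ, eq_blk_of_isFactor_square_append hβ⟩
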